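/- Fix N ≥ 1. For each ω, η ∈ I^N let h_{ωη} : SG' × SG'' → ℝ be continuous, satisfying the matching conditions: (i) if ω = ω_1…ω_{N−1}i and τ = ω_1…ω_{N−1}j then h_{ωη}(p_j, s) = h_{τη}(p_i, s) for all s ∈ SG''; (ii) if η = η_1…η_{N−1}i and ξ = η_1…η_{N−1}j then h_{ωη}(t, q_j) = h_{ωξ}(t, q_i) for all t ∈ SG'; (iii) if ω = ω_1…ω_{N−1}i, τ = ω_1…ω_{N−1}j, η = η_1…η_{N−1}k, ξ = η_1…η_{N−1}l then h_{ωη}(p_j, q_l) = h_{τξ}(p_i, q_k). Let α ∈ ℝ with |α| < 1 be a single constant scaling factor used for all ω, η, and suppose h_{ωη}(p_i, s) = h_{ω'η}(p_j, s) and h_{ωη}(t, q_i) = h_{ωη'}(t, q_j) hold consistently so that constant boundary values are compatible. Then there exists a unique continuous function f : SG' × SG'' → ℝ, with f(p_i, s) = f(p_j, s) and f(t, q_i) = f(t, q_j) for all t ∈ SG', s ∈ SG'', i,j ∈ I, satisfying f(L_ω(t), K_η(s)) = α·f(t,s) + h_{ωη}(t,s) for all ω, η ∈ I^N and all (t,s)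 ∈ SG' × SG''. -/

import Mathlib

noncomputable section

/-- Points of the plane ℝ². -/
abbrev E2 := EuclideanSpace ℝ (Fin 2)

/-- The contraction `L_i(t) = (t + p_i)/2` of the plane towards the vertex `p i`. -/
def Lmap (p : Fin 3 → E2) (i : Fin 3) (t : E2) : E2 := (2 : ℝ)⁻¹ • (t + p i)

/-- `p 1, p 2, p 3` are the vertices of an equilateral triangle: pairwise distinct
points with all three pairwise distances equal. -/
def IsEquilateral (p : Fin 3 → E2) : Prop :=
  Function.Injective p ∧
    ∀ i j k l : Fin 3, i ≠ j → k ≠ l → dist (p i) (p j) = dist (p k) (p l)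

/-- `S` is the Sierpiński gasket with vertex set `p`: the unique nonempty compact set
invariant under the three contractions `L_i(t) = (t + p_i)/2`. -/
def IsSG (p : Fin 3 → E2) (S : Set E2) : Prop :=
  IsEquilateral p ∧ S.Nonempty ∧ IsCompact S ∧ S = ⋃ i : Fin 3, Lmap p i '' S

/-- For a word `ω = ω₁ω₂…ω_n` over `I = {1,2,3}`, the composition
`L_ω = L_{ω₁} ∘ L_{ω₂} ∘ ⋯ ∘ L_{ω_n}`. -/
def wordMap (p : Fin 3 → E2) {n : ℕ} (ω : Fin n → Fin 3) : E2 → E2 :=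
  (List.ofFn fun k => Lmap p (ω k)).foldr (· ∘ ·) id

/-- `f` is a fractal interpolation function for the constant scaling factor `α` and
the data `h` on `SG' × SG''`: it is continuous on `SG' × SG''`, takes equal values on
the boundary slices `{p_i} × SG''` (resp. `SG' × {q_i}`), and satisfies
`f(L_ω(t), K_η(s)) = α·f(t,s) + h_{ωη}(t,s)` for all words `ω, η` of length `N+1`. -/
def IsFIFConst (p q : Fin 3 → E2) (SG' SG'' : Set E2) {N : ℕ} (α : ℝ)
    (h : (Fin (N + 1) → Fin 3) → (Fin (N + 1) → Fin 3) → E2 × E2 → ℝ)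
    (f : E2 × E2 → ℝ) : Prop :=
  ContinuousOn f (SG' ×ˢ SG'') ∧
    (∀ i j : Fin 3, ∀ s ∈ SG'', f (p i, s) = f (p j, s)) ∧
    (∀ i j : Fin 3, ∀ t ∈ SG', f (t, q i) = f (t, q j)) ∧
    ∀ ω η : Fin (N + 1) → Fin 3, ∀ t ∈ SG', ∀ s ∈ SG'',
      f (wordMap p ω t, wordMap q η s) = α * f (t, s) + h ω η (t, s)

/-! ### Abstract fixed point argument -/

theorem abstract_fif {A B W : Type*} [TopologicalSpace A] [CompactSpace A] [T2Space A]
    [TopologicalSpace B] [CompactSpace B] [T2Space B] [Finite W]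
    [TopologicalSpace W] [DiscreteTopology W]
    (Φ : W → A → A) (Ψ : W → B → B) (P : Fin 3 → A) (Q : Fin 3 → B)
    (hΦ : ∀ w, Continuous (Φ w)) (hΨ : ∀ w, Continuous (Ψ w))
    (sΦ : ∀ a, ∃ w t, Φ w t = a) (sΨ : ∀ a, ∃ w t, Ψ w t = a)
    (iΦ : ∀ w v t u, Φ w t = Φ v u → (w = v ∧ t = u) ∨ ∃ i j, t = P i ∧ u = P j)
    (iΨ : ∀ w v t u, Ψ w t = Ψ v u → (w = v ∧ t = u) ∨ ∃ i j, t = Q i ∧ u = Q j)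
    (fΦ : ∀ i, ∃ w, Φ w (P i) = P i) (fΨ : ∀ i, ∃ w, Ψ w (Q i) = Q i)
    (α : ℝ) (hα : |α| < 1) (h : W → W → A × B → ℝ) (hc : ∀ w v, Continuous (h w v))
    (h1 : ∀ w w' v i j s, h w v (P i, s) = h w' v (P j, s))
    (h2 : ∀ w v v' i j t, h w v (t, Q i) = h w v' (t, Q j)) :
    ∃ f : C(A × B, ℝ), (∀ i j s, f (P i, s) = f (P j, s)) ∧
      (∀ i j t, f (t, Q i) = f (t, Q j)) ∧
      (∀ w v t s, f (Φ w t, Ψ v s) = α * f (t, s) + h w v (t, s)) ∧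
      ∀ g : C(A × B, ℝ),
        (∀ w v t s, g (Φ w t, Ψ v s) = α * g (t, s) + h w v (t, s)) → f = g := by
  classical
  let F : Set C(A × B, ℝ) := {f | (∀ i j s, f (P i, s) = f (P j, s)) ∧
      (∀ i j t, f (t, Q i) = f (t, Q j))}
  have Fcl : IsClosed F := by
    have e (x : A × B) : Continuous fun f : C(A × B, ℝ) => f x :=
      continuous_eval_const x
    refine IsClosed.inter (s₁ := {f : C(A × B, ℝ) | ∀ i j s, f (P i, s) = f (P j, s)})
      (s₂ := {f : C(A × B, ℝ) | ∀ i j t, f (t, Q i) = f (t, Q j)}) ?_ ?_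
    · simp only [Set.setOf_forall]
      exact isClosed_iInter fun i => isClosed_iInter fun j => isClosed_iInter fun s =>
        isClosed_eq (e _) (e _)
    · simp only [Set.setOf_forall]
      exact isClosed_iInter fun i => isClosed_iInter fun j => isClosed_iInter fun s =>
        isClosed_eq (e _) (e _)
  let Θ : (W × W) × (A × B) → A × B := fun x => (Φ x.1.1 x.2.1, Ψ x.1.2 x.2.2)
  have Θc : Continuous Θ := by
    rw [continuous_prod_of_discrete_left]
    intro w
    exact ((hΦ w.1).comp continuous_fst).prodMk ((hΨ w.2).comp continuous_snd)
  have Θs : Function.Surjective Θ := by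
    rintro ⟨a, b⟩
    obtain ⟨w, t, rfl⟩ := sΦ a
    obtain ⟨v, s, rfl⟩ := sΨ b
    exact ⟨((w, v), (t, s)), rfl⟩
  have Θq : Topology.IsQuotientMap (⟨Θ, Θc⟩ : C((W × W) × (A × B), A × B)) := (Θc.isClosedMap).isQuotientMap Θc Θs
  have key : ∀ f : F, ∃ g : F, ∀ w v t s,
      g.1 (Φ w t, Ψ v s) = α * f.1 (t, s) + h w v (t, s) := by
    rintro ⟨f, hf1, hf2⟩
    let G : C((W × W) × (A × B), ℝ) :=
      ⟨fun x => α * f x.2 + h x.1.1 x.1.2 x.2, by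
        rw [continuous_prod_of_discrete_left]
        intro w
        exact (continuous_const.mul f.continuous).add (hc w.1 w.2)⟩
    have hG : Function.FactorsThrough G Θ := by
      rintro ⟨⟨w, v⟩, ⟨t, s⟩⟩ ⟨⟨w', v'⟩, ⟨t', s'⟩⟩ hxy
      simp only [Θ, Prod.mk.injEq] at hxy
      change α * f (t, s) + h w v (t, s) = α * f (t', s') + h w' v' (t', s')
      trans α * f (t', s) + h w' v (t', s)
      · rcases iΦ _ _ _ _ hxy.1 with ⟨rfl, rfl⟩ | ⟨i, j, rfl, rfl⟩
        · rfl
        · rw [hf1 i j, h1 w w' v i j]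
      · rcases iΨ _ _ _ _ hxy.2 with ⟨rfl, rfl⟩ | ⟨i, j, rfl, rfl⟩
        · rfl
        · rw [hf2 i j, h2 w' v v' i j]
    let g : C(A × B, ℝ) := Θq.lift G hG
    have hg : ∀ w v t s, g (Φ w t, Ψ v s) = α * f (t, s) + h w v (t, s) := by
      intro w v t s
      exact DFunLike.congr_fun (Θq.lift_comp G hG) ((w, v), (t, s))
    refine ⟨⟨g, ?_, ?_⟩, hg⟩
    · intro i j s
      obtain ⟨v, s, rfl⟩ := sΨ s
      obtain ⟨w, hw⟩ := fΦ i
      obtain ⟨w', hw'⟩ := fΦ j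
      rw [← hw, ← hw', hg, hg, hf1 i j, h1 w w' v i j]
    · intro i j t
      obtain ⟨v, t, rfl⟩ := sΦ t
      obtain ⟨w, hw⟩ := fΨ i
      obtain ⟨w', hw'⟩ := fΨ j
      rw [← hw, ← hw', hg, hg, hf2 i j, h2 v w w' i j]
  have contr : ∀ f₁ f₂ g₁ g₂ : C(A × B, ℝ),
      (∀ w v t s, g₁ (Φ w t, Ψ v s) = α * f₁ (t, s) + h w v (t, s)) →
      (∀ w v t s, g₂ (Φ w t, Ψ v s) = α * f₂ (t, s) + h w v (t, s)) →
      dist g₁ g₂ ≤ |α| * dist f₁ f₂ := by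
    intro f₁ f₂ g₁ g₂ e₁ e₂
    rw [ContinuousMap.dist_le (by positivity)]
    rintro ⟨a, b⟩
    obtain ⟨w, t, rfl⟩ := sΦ a
    obtain ⟨v, s, rfl⟩ := sΨ b
    rw [e₁, e₂, Real.dist_eq, add_sub_add_right_eq_sub, ← mul_sub, abs_mul, ← Real.dist_eq]
    gcongr
    exact ContinuousMap.dist_apply_le_dist _
  choose T hT using key
  have hTc : ContractingWith ‖α‖₊ T := by
    refine ⟨?_, LipschitzWith.of_dist_le_mul fun x y => ?_⟩
    · rw [← NNReal.coe_lt_coe]; simpa using hα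
    · exact contr _ _ _ _ (hT x) (hT y)
  haveI : CompleteSpace F := Fcl.completeSpace_coe
  haveI : Nonempty F := ⟨⟨0, by simp [F]⟩⟩
  have hfix := hTc.fixedPoint_isFixedPt
  set f := ContractingWith.fixedPoint T hTc
  have hf := hT f
  rw [hfix.eq] at hf
  refine ⟨f.1, f.2.1, f.2.2, hf, fun g hg => ?_⟩
  have := contr _ _ _ _ hf hg
  have h0 : dist f.1 g = 0 := by
    have := dist_nonneg (x := f.1) (y := g)
    nlinarith
  exact dist_eq_zero.1 h0

/-! ### Geometry of the gasket -/

theorem exists_coord {p : Fin 3 → E2} (hp : IsEquilateral p) (i : Fin 3) :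
    ∃ l : E2 → ℝ, Continuous l ∧ (∀ j t, l (Lmap p j t) = (l t + if i = j then 1 else 0) / 2) := by
  obtain ⟨hinj, hd⟩ := hp
  obtain ⟨j, k, hij, hik, hjk, hall⟩ : ∃ j k : Fin 3, i ≠ j ∧ i ≠ k ∧ j ≠ k ∧
      ∀ m, m = i ∨ m = j ∨ m = k := by
    revert i; decide
  have e1 := hd i j i k hij hik
  have e2 := hd i j j k hij hjk
  have hpos : 0 < dist (p i) (p j) := dist_pos.2 fun e => hij (hinj e)
  set u := p i - p j with hu
  set v := p i - p k with hv
  have huv : p j - p k = v - u := by simp [hu, hv]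
  rw [dist_eq_norm, dist_eq_norm] at e1 e2
  rw [dist_eq_norm] at hpos
  rw [huv, ← hu] at e2
  rw [← hu, ← hv] at e1
  rw [← hu] at hpos
  have n1 : inner ℝ v v = inner ℝ u u := by
    rw [real_inner_self_eq_norm_sq, real_inner_self_eq_norm_sq, e1]
  have n2 : 2 * inner ℝ u v = inner ℝ u u := by
    have : ‖v - u‖ ^ 2 = ‖u‖ ^ 2 := by rw [e2]
    rw [norm_sub_sq_real, real_inner_comm, ← e1] at this
    rw [real_inner_self_eq_norm_sq]; linarith
  have n3 : 0 < inner ℝ u u := by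
    rw [real_inner_self_eq_norm_sq]; positivity
  set D : ℝ := inner ℝ u u
  have hl : ∀ m, inner ℝ (p m - p j) (u + v) / (3 / 2 * D) = if i = m then 1 else 0 := by
    intro m
    rcases hall m with rfl | rfl | rfl
    · rw [← hu, inner_add_right, if_pos rfl, div_eq_one_iff_eq (by positivity)]
      change D + _ = _
      linarith
    · simp [hij]
    · have : p m - p j = u - v := by simp [hu, hv]
      rw [this, if_neg hik, inner_add_right, inner_sub_left (x := u) (y := v),
        inner_sub_left (x := u) (y := v), n1, real_inner_comm u v]
      simp [D]
  refine ⟨fun t => inner ℝ (t - p j) (u + v) / (3 / 2 * D), by fun_prop, fun m t => ?_⟩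
  rw [← hl m]
  beta_reduce
  have : Lmap p m t - p j = (2 : ℝ)⁻¹ • ((t - p j) + (p m - p j)) := by
    rw [Lmap]; module
  rw [this, inner_smul_left, inner_add_left]
  simp
  ring

section gasket
variable {p : Fin 3 → E2} {S : Set E2}

theorem continuous_Lmap (p : Fin 3 → E2) (i : Fin 3) : Continuous (Lmap p i) := by
  unfold Lmap; fun_prop

theorem Lmap_self (p : Fin 3 → E2) (i : Fin 3) : Lmap p i (p i) = p i := by
  unfold Lmap; module

theorem dist_Lmap (p : Fin 3 → E2) (i : Fin 3) (t : E2) :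
    dist (Lmap p i t) (p i) = dist t (p i) / 2 := by
  have : Lmap p i t - p i = (2 : ℝ)⁻¹ • (t - p i) := by unfold Lmap; module
  rw [dist_eq_norm, dist_eq_norm, this, norm_smul]
  norm_num
  ring

theorem Lmap_inj {i : Fin 3} {t u : E2} (h : Lmap p i t = Lmap p i u) : t = u := by
  unfold Lmap at h
  have := smul_right_injective E2 (by norm_num : (2 : ℝ)⁻¹ ≠ 0) h
  simpa using this

theorem Lmap_mem (hS : IsSG p S) (i : Fin 3) {t : E2} (ht : t ∈ S) : Lmap p i t ∈ S := by
  rw [hS.2.2.2]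
  exact Set.mem_iUnion.2 ⟨i, t, ht, rfl⟩

theorem exists_Lmap (hS : IsSG p S) {t : E2} (ht : t ∈ S) : ∃ i, ∃ u ∈ S, Lmap p i u = t := by
  rw [hS.2.2.2] at ht
  exact Set.mem_iUnion.1 ht

theorem vertex_mem (hS : IsSG p S) (i : Fin 3) : p i ∈ S := by
  obtain ⟨x, hx, hmin⟩ := hS.2.2.1.exists_isMinOn hS.2.1
    (f := fun t => dist t (p i)) (by fun_prop)
  have := hmin (Lmap_mem hS i hx)
  simp only [Set.mem_ofPred_eq, dist_Lmap] at this
  have h0 : dist x (p i) = 0 := by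
    have := dist_nonneg (x := x) (y := p i)
    linarith
  rwa [← dist_eq_zero.1 h0]

/-- A coordinate function on the gasket. -/
theorem exists_coord_SG (hS : IsSG p S) (i : Fin 3) :
    ∃ l : E2 → ℝ, (∀ j t, l (Lmap p j t) = (l t + if i = j then 1 else 0) / 2) ∧
      (∀ t ∈ S, 0 ≤ l t) ∧ (∀ t ∈ S, l t ≤ 1) ∧ ∀ t ∈ S, l t = 1 → t = p i := by
  obtain ⟨l, lc, hl⟩ := exists_coord hS.1 i
  have l0 : ∀ t ∈ S, 0 ≤ l t := by
    obtain ⟨x, hx, hmin⟩ := hS.2.2.1.exists_isMinOn hS.2.1 lc.continuousOn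
    intro t ht
    refine le_trans ?_ (hmin ht)
    obtain ⟨j, u, hu, rfl⟩ := exists_Lmap hS hx
    have := hmin hu
    simp only [Set.mem_ofPred_eq, hl] at this ⊢
    split_ifs at this ⊢ <;> linarith
  have l1 : ∀ t ∈ S, l t ≤ 1 := by
    obtain ⟨x, hx, hmax⟩ := hS.2.2.1.exists_isMaxOn hS.2.1 lc.continuousOn
    intro t ht
    refine le_trans (hmax ht) ?_
    obtain ⟨j, u, hu, rfl⟩ := exists_Lmap hS hx
    have := hmax hu
    simp only [Set.mem_ofPred_eq, hl] at this ⊢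
    split_ifs at this ⊢ <;> linarith
  refine ⟨l, hl, l0, l1, fun t ht h1 => ?_⟩
  have hcpt : IsCompact (S ∩ l ⁻¹' {1}) :=
    hS.2.2.1.inter_right (isClosed_singleton.preimage lc)
  obtain ⟨x, ⟨hx, hx1⟩, hmax⟩ := hcpt.exists_isMaxOn ⟨t, ht, h1⟩
    (f := fun t => dist t (p i)) (by fun_prop)
  have h2 := hmax (show t ∈ S ∩ l ⁻¹' {1} from ⟨ht, h1⟩)
  simp only [Set.mem_ofPred_eq] at h2
  obtain ⟨j, u, hu, rfl⟩ := exists_Lmap hS hx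
  have hx1 : l (Lmap p j u) = 1 := hx1
  rw [hl] at hx1
  have hij : i = j := by
    by_contra hne
    rw [if_neg hne] at hx1
    linarith [l1 u hu]
  subst hij
  rw [if_pos rfl] at hx1
  have h3 := hmax (show u ∈ S ∩ l ⁻¹' {1} from ⟨hu, show l u = 1 by linarith⟩)
  simp only [Set.mem_ofPred_eq, dist_Lmap] at h3 h2
  refine dist_eq_zero.1 (le_antisymm ?_ dist_nonneg)
  linarith

theorem Lmap_meet (hS : IsSG p S) {i j : Fin 3} (hij : i ≠ j) {t u : E2} (ht : t ∈ S)
    (hu : u ∈ S) (h : Lmap p i t = Lmap p j u) : u = p i := by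
  obtain ⟨l, hl, l0, l1, le⟩ := exists_coord_SG hS i
  apply le u hu
  have := congrArg l h
  rw [hl, hl, if_pos rfl, if_neg hij] at this
  linarith [l0 t ht, l1 u hu]

theorem Lmap_vertex (hS : IsSG p S) {i j : Fin 3} {t : E2} (ht : t ∈ S)
    (h : Lmap p i t = p j) : t = p j := by
  obtain ⟨l, hl, l0, l1, le⟩ := exists_coord_SG hS j
  apply le t ht
  have h1 := hl j (p j)
  rw [Lmap_self, if_pos rfl] at h1
  have := congrArg l h
  rw [hl] at this
  have := l1 t ht
  split_ifs at * <;> linarith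

theorem wordMap_succ (p : Fin 3 → E2) {n : ℕ} (ω : Fin (n + 1) → Fin 3) (t : E2) :
    wordMap p ω t = Lmap p (ω 0) (wordMap p (Fin.tail ω) t) := by
  simp [wordMap, List.ofFn_succ, Fin.tail]

theorem wordMap_zero (p : Fin 3 → E2) (ω : Fin 0 → Fin 3) (t : E2) : wordMap p ω t = t := by
  simp [wordMap]

theorem continuous_wordMap (p : Fin 3 → E2) {n : ℕ} (ω : Fin n → Fin 3) :
    Continuous (wordMap p ω) := by
  induction n with
  | zero => exact continuous_id.congr fun t => (wordMap_zero p ω t).symm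
  | succ n ih =>
    exact ((continuous_Lmap p (ω 0)).comp (ih (Fin.tail ω))).congr
      fun t => (wordMap_succ p ω t).symm

theorem wordMap_mem (hS : IsSG p S) {n : ℕ} (ω : Fin n → Fin 3) {t : E2} (ht : t ∈ S) :
    wordMap p ω t ∈ S := by
  induction n with
  | zero => rwa [wordMap_zero]
  | succ n ih => rw [wordMap_succ]; exact Lmap_mem hS _ (ih _)

theorem exists_wordMap (hS : IsSG p S) (n : ℕ) {t : E2} (ht : t ∈ S) :
    ∃ ω : Fin n → Fin 3, ∃ u ∈ S, wordMap p ω u = t := by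
  induction n generalizing t with
  | zero => exact ⟨Fin.elim0, t, ht, wordMap_zero _ _ _⟩
  | succ n ih =>
    obtain ⟨i, u, hu, rfl⟩ := exists_Lmap hS ht
    obtain ⟨ω, v, hv, rfl⟩ := ih hu
    exact ⟨Fin.cons i ω, v, hv, by rw [wordMap_succ]; simp⟩

theorem wordMap_const (p : Fin 3 → E2) (n : ℕ) (i : Fin 3) :
    wordMap p (fun _ : Fin n => i) (p i) = p i := by
  induction n with
  | zero => exact wordMap_zero _ _ _
  | succ n ih =>
    rw [wordMap_succ]
    have : Fin.tail (fun _ : Fin (n + 1) => i) = fun _ => i := rfl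
    rw [this, ih, Lmap_self]

theorem wordMap_vertex (hS : IsSG p S) {n : ℕ} (ω : Fin n → Fin 3) {j : Fin 3} {t : E2}
    (ht : t ∈ S) (h : wordMap p ω t = p j) : t = p j := by
  induction n with
  | zero => rwa [wordMap_zero] at h
  | succ n ih =>
    rw [wordMap_succ] at h
    exact ih _ (Lmap_vertex hS (wordMap_mem hS _ ht) h)

theorem wordMap_meet (hS : IsSG p S) {n : ℕ} (ω τ : Fin n → Fin 3) {t u : E2}
    (ht : t ∈ S) (hu : u ∈ S) (h : wordMap p ω t = wordMap p τ u) :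
    (ω = τ ∧ t = u) ∨ ∃ i j, t = p i ∧ u = p j := by
  induction n with
  | zero =>
    rw [wordMap_zero, wordMap_zero] at h
    exact Or.inl ⟨Subsingleton.elim _ _, h⟩
  | succ n ih =>
    rw [wordMap_succ, wordMap_succ] at h
    by_cases h0 : ω 0 = τ 0
    · rw [h0] at h
      rcases ih _ _ (Lmap_inj h) with ⟨h1, h2⟩ | h1
      · refine Or.inl ⟨?_, h2⟩
        rw [← Fin.cons_self_tail ω, ← Fin.cons_self_tail τ, h0, h1]
      · exact Or.inr h1
    · refine Or.inr ⟨τ 0, ω 0, ?_, ?_⟩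
      · exact wordMap_vertex hS _ ht (Lmap_meet hS (Ne.symm h0) (wordMap_mem hS _ hu)
          (wordMap_mem hS _ ht) h.symm)
      · exact wordMap_vertex hS _ hu (Lmap_meet hS h0 (wordMap_mem hS _ ht)
          (wordMap_mem hS _ hu) h)

end gasket

/-- The variant of the construction of the fractal interpolation function on
`SG' × SG''` with a single constant scaling factor `α`, `|α| < 1`: under the matching
conditions (i)–(iii) and the compatibility of the boundary values of the maps
`h_{ωη}`, there is a unique continuous `f` with equal values on corresponding
boundary slices satisfying `f(L_ω(t), K_η(s)) = α·f(t,s) + h_{ωη}(t,s)`. -/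
theorem stmt_17 (p q : Fin 3 → E2) (SG' SG'' : Set E2)
    (hSG' : IsSG p SG') (hSG'' : IsSG q SG'') (N : ℕ) (α : ℝ) (hα : |α| < 1)
    (h : (Fin (N + 1) → Fin 3) → (Fin (N + 1) → Fin 3) → E2 × E2 → ℝ)
    (hhcont : ∀ ω η, ContinuousOn (h ω η) (SG' ×ˢ SG''))
    -- matching condition (i)
    (hmatch1 : ∀ ω τ η : Fin (N + 1) → Fin 3,
      (∀ k : Fin (N + 1), k ≠ Fin.last N → ω k = τ k) →
      ∀ s ∈ SG'', h ω η (p (τ (Fin.last N)), s) = h τ η (p (ω (Fin.last N)), s))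
    -- matching condition (ii)
    (hmatch2 : ∀ ω η ξ : Fin (N + 1) → Fin 3,
      (∀ k : Fin (N + 1), k ≠ Fin.last N → η k = ξ k) →
      ∀ t ∈ SG', h ω η (t, q (ξ (Fin.last N))) = h ω ξ (t, q (η (Fin.last N))))
    -- matching condition (iii)
    (hmatch3 : ∀ ω τ η ξ : Fin (N + 1) → Fin 3,
      (∀ k : Fin (N + 1), k ≠ Fin.last N → ω k = τ k) →
      (∀ k : Fin (N + 1), k ≠ Fin.last N → η k = ξ k) →
      h ω η (p (τ (Fin.last N)), q (ξ (Fin.last N))) =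
        h τ ξ (p (ω (Fin.last N)), q (η (Fin.last N))))
    -- compatibility of boundary values of `h`
    (hcomp1 : ∀ ω ω' η : Fin (N + 1) → Fin 3, ∀ i j : Fin 3, ∀ s ∈ SG'',
      h ω η (p i, s) = h ω' η (p j, s))
    (hcomp2 : ∀ ω η η' : Fin (N + 1) → Fin 3, ∀ i j : Fin 3, ∀ t ∈ SG',
      h ω η (t, q i) = h ω η' (t, q j)) :
    ∃ f : E2 × E2 → ℝ, IsFIFConst p q SG' SG'' α h f ∧
      ∀ g : E2 × E2 → ℝ, IsFIFConst p q SG' SG'' α h g →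
        Set.EqOn f g (SG' ×ˢ SG'') := by
  classical
  haveI : CompactSpace SG' := isCompact_iff_compactSpace.1 hSG'.2.2.1
  haveI : CompactSpace SG'' := isCompact_iff_compactSpace.1 hSG''.2.2.1
  let ι : SG' × SG'' → E2 × E2 := fun x => (x.1.1, x.2.1)
  have ιc : Continuous ι := by fun_prop
  have ιm : ∀ x, ι x ∈ SG' ×ˢ SG'' := fun x => ⟨x.1.2, x.2.2⟩
  obtain ⟨f, f1, f2, f3, f4⟩ := abstract_fif (A := SG') (B := SG'') (W := Fin (N + 1) → Fin 3)
    (fun w t => ⟨wordMap p w t, wordMap_mem hSG' w t.2⟩)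
    (fun w t => ⟨wordMap q w t, wordMap_mem hSG'' w t.2⟩)
    (fun i => ⟨p i, vertex_mem hSG' i⟩) (fun i => ⟨q i, vertex_mem hSG'' i⟩)
    (fun w => ((continuous_wordMap p w).comp continuous_subtype_val).subtype_mk _)
    (fun w => ((continuous_wordMap q w).comp continuous_subtype_val).subtype_mk _)
    (fun a => by
      obtain ⟨w, u, hu, e⟩ := exists_wordMap hSG' (N + 1) a.2
      exact ⟨w, ⟨u, hu⟩, Subtype.ext e⟩)
    (fun a => by
      obtain ⟨w, u, hu, e⟩ := exists_wordMap hSG'' (N + 1) a.2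
      exact ⟨w, ⟨u, hu⟩, Subtype.ext e⟩)
    (fun w v t u e => by
      simpa [Subtype.ext_iff] using wordMap_meet hSG' w v t.2 u.2 (congrArg Subtype.val e))
    (fun w v t u e => by
      simpa [Subtype.ext_iff] using wordMap_meet hSG'' w v t.2 u.2 (congrArg Subtype.val e))
    (fun i => ⟨fun _ => i, Subtype.ext (wordMap_const p _ i)⟩)
    (fun i => ⟨fun _ => i, Subtype.ext (wordMap_const q _ i)⟩)
    α hα (fun w v x => h w v (ι x))
    (fun w v => (hhcont w v).comp_continuous ιc ιm)
    (fun w w' v i j s => hcomp1 w w' v i j s s.2)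
    (fun w v v' i j t => hcomp2 w v v' i j t t.2)
  let g : E2 × E2 → ℝ := fun x =>
    if hx : x.1 ∈ SG' ∧ x.2 ∈ SG'' then f (⟨x.1, hx.1⟩, ⟨x.2, hx.2⟩) else 0
  have hg : ∀ t (ht : t ∈ SG') s (hs : s ∈ SG''), g (t, s) = f (⟨t, ht⟩, ⟨s, hs⟩) :=
    fun t ht s hs => dif_pos ⟨ht, hs⟩
  refine ⟨g, ⟨?_, ?_, ?_, ?_⟩, ?_⟩
  · rw [continuousOn_iff_continuous_domRestrict]
    have : Continuous fun x : ↥(SG' ×ˢ SG'') =>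
        f ((⟨x.1.1, x.2.1⟩ : SG'), (⟨x.1.2, x.2.2⟩ : SG'')) := by fun_prop
    exact this.congr fun x => (hg _ x.2.1 _ x.2.2).symm
  · intro i j s hs
    rw [hg _ (vertex_mem hSG' i) _ hs, hg _ (vertex_mem hSG' j) _ hs]
    exact f1 i j ⟨s, hs⟩
  · intro i j t ht
    rw [hg _ ht _ (vertex_mem hSG'' i), hg _ ht _ (vertex_mem hSG'' j)]
    exact f2 i j ⟨t, ht⟩
  · intro ω η t ht s hs
    rw [hg _ (wordMap_mem hSG' ω ht) _ (wordMap_mem hSG'' η hs), hg _ ht _ hs]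
    exact f3 ω η ⟨t, ht⟩ ⟨s, hs⟩
  · rintro g' ⟨c, -, -, e⟩ ⟨t, s⟩ ⟨ht, hs⟩
    have := f4 ⟨fun x => g' (ι x), c.comp_continuous ιc ιm⟩
      (fun w v t s => e w v t t.2 s s.2)
    rw [hg _ ht _ hs, this]
    rfl
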